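/- Assume the additive-noise setting, let c ∈ [0,∞), q ∈ [2,∞) and assume that x·μ(x) ≤ c(1+x²) for all x ∈ (0,∞). Then ‖ sup_{t∈[0,T]} (X_t)² ‖_{L^q(Ω;ℝ)} ≤ ‖ (X_0)² ‖_{L^q(Ω;ℝ)} + 2cT · ( sup_{s∈[0,T]} ‖X_s‖_{L^{2q}(Ω;ℝ)} )² + √(2Tq³/(q−1)) · sup_{s∈[0,T]} ‖X_s‖_{L^q(Ω;ℝ)} + T(2c+1). -/

import Mathlib

open MeasureTheory ProbabilityTheory Filter Set
open scoped ENNReal NNReal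

noncomputable section


lemma taylor_one (q : ℝ) (hq : 2 ≤ q) (η : ℝ) (hη : 0 < η) :
    ∃ δ > 0, δ < 1 ∧ ∀ d : ℝ, |d| < δ →
      (1 + d) ^ q ≤ 1 + q * d + q * (q - 1) / 2 * (1 + η) * d ^ 2 := by
  have hcont : ContinuousAt (fun d : ℝ => (1 + d) ^ (q - 2)) 0 := by
    apply ContinuousAt.rpow_const (by fun_prop)
    right; linarith
  have h1 : ∀ᶠ d in nhds (0:ℝ), (1 + d) ^ (q - 2) < 1 + η := by
    apply hcont.eventually_lt continuousAt_const
    simp [hη]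
  obtain ⟨δ0, hδ0, h2⟩ := Metric.eventually_nhds_iff.1 h1
  refine ⟨min δ0 (1/2), by positivity, by
    have := min_le_right δ0 (1/2:ℝ); linarith, ?_⟩
  set δ := min δ0 (1/2) with hδ
  have hδa : δ ≤ δ0 := min_le_left _ _
  have hδb : δ ≤ 1/2 := min_le_right _ _
  have hpos : ∀ d : ℝ, |d| < δ → 0 < 1 + d := fun d hd => by
    have := (abs_lt.1 hd).1; linarith
  let h : ℝ → ℝ := fun d => 1 + q * d + q * (q - 1) / 2 * (1 + η) * d ^ 2 - (1 + d) ^ q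
  let h' : ℝ → ℝ := fun d => q + q * (q - 1) * (1 + η) * d - q * (1 + d) ^ (q - 1)
  let h'' : ℝ → ℝ := fun d => q * (q - 1) * (1 + η) - q * ((q - 1) * (1 + d) ^ (q - 2))
  have hd1 : ∀ d, |d| < δ → HasDerivAt h (h' d) d := by
    intro d hd
    have e1 : HasDerivAt (fun d : ℝ => 1 + d) 1 d := by
      simpa using (hasDerivAt_id d).const_add 1
    have e2 := e1.rpow_const (p := q) (Or.inl (hpos d hd).ne')
    have e3 : HasDerivAt (fun d : ℝ => 1 + q * d + q * (q - 1) / 2 * (1 + η) * d ^ 2)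
      (q * 1 + q * (q - 1) / 2 * (1 + η) * (2 * d)) d := by
      have := ((hasDerivAt_id d).const_mul q).const_add 1
      have e4 := (hasDerivAt_pow 2 d).const_mul (q * (q - 1) / 2 * (1 + η))
      exact (this.add e4).congr_deriv (by simp)
    exact (e3.sub e2).congr_deriv (by simp only [h']; ring)
  have hd2 : ∀ d, |d| < δ → HasDerivAt h' (h'' d) d := by
    intro d hd
    have e1 : HasDerivAt (fun d : ℝ => 1 + d) 1 d := by
      simpa using (hasDerivAt_id d).const_add 1
    have e2 := (e1.rpow_const (p := q - 1) (Or.inl (hpos d hd).ne')).const_mul q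
    have e3 : HasDerivAt (fun d : ℝ => q + q * (q - 1) * (1 + η) * d)
      (q * (q - 1) * (1 + η) * 1) d :=
      ((hasDerivAt_id d).const_mul (q * (q - 1) * (1 + η))).const_add q
    refine (e3.sub e2).congr_deriv ?_
    simp only [h'']
    rw [show q - 1 - 1 = q - 2 by ring]; ring
  have hnn : ∀ d, |d| < δ → 0 ≤ h'' d := by
    intro d hd
    have := h2 (y := d) (by simpa [Real.dist_eq] using lt_of_lt_of_le hd hδa)
    simp only [h'']
    have hqq : 0 ≤ q * (q - 1) := by nlinarith
    nlinarith
  have hconv : ∀ d ∈ Ioo (-δ) δ, |d| < δ := fun d hd => abs_lt.2 hd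
  have hmono : MonotoneOn h' (Ioo (-δ) δ) := by
    apply monotoneOn_of_deriv_nonneg (convex_Ioo _ _)
    · intro d hd; exact (hd2 d (hconv d hd)).continuousAt.continuousWithinAt
    · intro d hd; rw [interior_Ioo] at hd; exact (hd2 d (hconv d hd)).differentiableAt.differentiableWithinAt
    · intro d hd; rw [interior_Ioo] at hd; rw [(hd2 d (hconv d hd)).deriv]; exact hnn d (hconv d hd)
  have hδpos : 0 < δ := by positivity
  have h'0 : h' 0 = 0 := by simp [h']
  have h0 : h 0 = 0 := by simp [h]
  intro d hd
  suffices 0 ≤ h d by simp only [h] at this; linarith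
  have hdI := abs_lt.1 hd
  rcases le_total 0 d with hd0 | hd0
  · have : MonotoneOn h (Icc 0 d) := by
      have key : ∀ y ∈ Icc 0 d, |y| < δ := fun y hy => abs_lt.2 ⟨by linarith [hy.1], by linarith [hy.2]⟩
      apply monotoneOn_of_deriv_nonneg (convex_Icc _ _)
      · intro y hy; exact (hd1 y (key y hy)).continuousAt.continuousWithinAt
      · intro y hy; exact (hd1 y (key y (interior_subset hy))).differentiableAt.differentiableWithinAt
      · intro y hy
        have hy := interior_subset hy
        rw [(hd1 y (key y hy)).deriv, ← h'0]
        exact hmono (by constructor <;> linarith) (abs_lt.1 (key y hy)) hy.1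
    have := this (left_mem_Icc.2 hd0) (right_mem_Icc.2 hd0) hd0
    linarith
  · have : AntitoneOn h (Icc d 0) := by
      have key : ∀ y ∈ Icc d 0, |y| < δ := fun y hy => abs_lt.2 ⟨by linarith [hy.1], by linarith [hy.2]⟩
      apply antitoneOn_of_deriv_nonpos (convex_Icc _ _)
      · intro y hy; exact (hd1 y (key y hy)).continuousAt.continuousWithinAt
      · intro y hy; exact (hd1 y (key y (interior_subset hy))).differentiableAt.differentiableWithinAt
      · intro y hy
        have hy := interior_subset hy
        rw [(hd1 y (key y hy)).deriv, ← h'0]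
        exact hmono (abs_lt.1 (key y hy)) (by constructor <;> linarith) hy.2
    have := this (left_mem_Icc.2 hd0) (right_mem_Icc.2 hd0) hd0
    linarith

lemma taylor_two (q : ℝ) (hq : 2 ≤ q) (η : ℝ) (hη : 0 < η) :
    ∃ C : ℝ, 0 ≤ C ∧ (q = 2 → C = 0) ∧ ∀ m d : ℝ,
      |m + d| ^ q ≤ |m| ^ q + q * (m * |m| ^ (q - 2) * d)
        + q * (q - 1) / 2 * (1 + η) * (|m| ^ (q - 2) * d ^ 2) + C * |d| ^ q := by
  rcases eq_or_ne q 2 with rfl | hq2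
  · refine ⟨0, le_rfl, fun _ => rfl, fun m d => ?_⟩
    norm_num
    nlinarith [sq_nonneg d]
  have hq3 : 2 < q := lt_of_le_of_ne hq (Ne.symm hq2)
  obtain ⟨δ, hδ, hδ1, H⟩ := taylor_one q hq η hη
  have hC : 1 ≤ (1 + 1 / δ) ^ q := Real.one_le_rpow (by have : 0 < 1/δ := by positivity
                                                        linarith) (by linarith)
  refine ⟨(1 + 1/δ) ^ q, by positivity, fun h => absurd h hq2, fun m d => ?_⟩
  have H1 : ∀ d : ℝ, |1 + d| ^ q ≤ 1 + q * d + q * (q - 1) / 2 * (1 + η) * d ^ 2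
      + (1 + 1/δ) ^ q * |d| ^ q := by
    intro d
    rcases lt_or_ge |d| δ with h | h
    · have := H d h
      rw [abs_of_pos (by have := (abs_lt.1 h).1; linarith)]
      have : 0 ≤ (1 + 1/δ) ^ q * |d| ^ q := by positivity
      linarith
    · have e1 : |1 + d| ≤ (1 + 1/δ) * |d| := by
        have : 1 ≤ 1/δ * |d| := by rw [div_mul_eq_mul_div, le_div_iff₀ hδ]; linarith
        have := abs_add_le 1 d
        rw [abs_one] at this
        linarith
      have e2 : |1 + d| ^ q ≤ (1 + 1/δ) ^ q * |d| ^ q := by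
        rw [← Real.mul_rpow (by positivity) (by positivity)]
        exact Real.rpow_le_rpow (by positivity) e1 (by linarith)
      have e3 : 0 ≤ 1 + q * d + q * (q - 1) / 2 * (1 + η) * d ^ 2 := by
        have : 0 ≤ q * (q-1) / 2 * η * d^2 := by
          have : 0 ≤ q - 1 := by linarith
          positivity
        nlinarith [sq_nonneg (1 + q/2 * d), mul_nonneg (mul_nonneg (by linarith : 0 ≤ q) (by linarith : 0 ≤ q - 2)) (sq_nonneg d)]
      linarith
  rcases eq_or_ne m 0 with rfl | hm
  · simp only [zero_add, abs_zero, zero_mul, mul_zero]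
    rw [Real.zero_rpow (by linarith), Real.zero_rpow (by linarith)]
    have : 0 ≤ |d| ^ q := by positivity
    nlinarith
  · have hm' : 0 < |m| := abs_pos.2 hm
    have := H1 (d / m)
    have e := mul_le_mul_of_nonneg_left this (by positivity : 0 ≤ |m| ^ q)
    rw [← Real.mul_rpow (by positivity) (by positivity), ← abs_mul] at e
    have e0 : m * (1 + d / m) = m + d := by field_simp
    rw [e0] at e
    refine e.trans (le_of_eq ?_)
    have e2 : |m| ^ q = |m| ^ (q - 2) * m ^ 2 := by
      rw [← sq_abs m, ← Real.rpow_natCast |m| 2, ← Real.rpow_add hm']; norm_num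
    have e3 : |m| ^ q * |d / m| ^ q = |d| ^ q := by
      rw [← Real.mul_rpow (by positivity) (by positivity), ← abs_mul]; congr 2; field_simp
    have e4 : |m| ^ q * (1 + q * (d / m) + q * (q - 1) / 2 * (1 + η) * (d / m) ^ 2
      + (1 + 1/δ) ^ q * |d/m| ^ q) = |m| ^ q + q * (|m| ^ q * (d / m)) + q * (q - 1) / 2 * (1 + η) * (|m| ^ q * (d / m) ^ 2) + (1 + 1/δ) ^ q * (|m| ^ q * |d / m| ^ q) := by ring
    rw [e4, e3]
    have e5 : |m| ^ q * (d / m) = m * |m| ^ (q - 2) * d := by rw [e2]; field_simp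
    have e6 : |m| ^ q * (d / m) ^ 2 = |m| ^ (q - 2) * d ^ 2 := by rw [e2]; field_simp
    rw [e5, e6]

lemma indep_prod {Ω : Type*} {m0 : MeasurableSpace Ω} {mΩ : MeasurableSpace Ω} {P : Measure Ω} [IsProbabilityMeasure P]
    (hm0 : m0 ≤ mΩ) {G : Ω → ℝ} (hG : Measurable G)
    (hind : Indep (MeasurableSpace.comap G inferInstance) m0 P)
    {Z : Ω → ℝ} (hZ : Measurable[m0] Z) (g : ℝ → ℝ) (hg : Measurable g)
    (hZi : Integrable Z P) (hgi : Integrable (fun ω => g (G ω)) P) :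
    Integrable (fun ω => Z ω * g (G ω)) P ∧
      ∫ ω, Z ω * g (G ω) ∂P = (∫ ω, Z ω ∂P) * ∫ ω, g (G ω) ∂P := by
  have h1 : IndepFun G Z P := by
    rw [IndepFun_iff_Indep]
    exact indep_of_indep_of_le_right hind hZ.comap_le
  have h2 : IndepFun Z (fun ω => g (G ω)) P := h1.symm.comp measurable_id hg
  have hZm : Measurable Z := hZ.mono hm0 le_rfl
  exact ⟨h2.integrable_mul hZi hgi,
    h2.integral_mul_eq_mul_integral hZm.aestronglyMeasurable (hg.comp hG).aestronglyMeasurable⟩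

lemma gauss_abs_moment {Ω : Type*} {mΩ : MeasurableSpace Ω} {P : Measure Ω} [IsProbabilityMeasure P]
    {G : Ω → ℝ} (hG : Measurable G) {Δ : ℝ} (hΔ : 0 ≤ Δ)
    (hlaw : Measure.map G P = gaussianReal 0 (Real.toNNReal Δ)) (p : ℝ) (hp : 0 < p) :
    Integrable (fun ω => |G ω| ^ p) P ∧
      ∫ ω, |G ω| ^ p ∂P = Δ ^ (p / 2) * ∫ y, |y| ^ p ∂(gaussianReal 0 1) := by
  have hmeas : Measurable (fun y : ℝ => |y| ^ p) := by fun_prop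
  constructor
  · have h1 : MemLp id (ENNReal.ofReal p) (gaussianReal 0 (Real.toNNReal Δ)) :=
      memLp_id_gaussianReal' _ (by simp)
    have h2 := h1.integrable_norm_rpow (by simpa using hp) (by simp)
    rw [ENNReal.toReal_ofReal hp.le, ← hlaw] at h2
    simp only [id, Real.norm_eq_abs] at h2
    exact (integrable_map_measure hmeas.aestronglyMeasurable hG.aemeasurable).1 h2
  · have h1 : Measure.map (fun y => Real.sqrt Δ * y) (gaussianReal 0 1) = Measure.map G P := by
      rw [hlaw, gaussianReal_map_const_mul]
      congr 1
      · simp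
      · ext; simp [Real.sq_sqrt hΔ, Real.coe_toNNReal _ hΔ]
    rw [← integral_map (f := fun y : ℝ => |y| ^ p) hG.aemeasurable hmeas.aestronglyMeasurable, ← h1,
      integral_map (by fun_prop) hmeas.aestronglyMeasurable, ← integral_const_mul]
    congr 1; ext y
    rw [abs_mul, Real.mul_rpow (by positivity) (by positivity), abs_of_nonneg (Real.sqrt_nonneg _),
      Real.sqrt_eq_rpow, ← Real.rpow_mul hΔ]
    congr 2; ring

lemma gauss_sq {Ω : Type*} {mΩ : MeasurableSpace Ω} {P : Measure Ω} [IsProbabilityMeasure P]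
    {G : Ω → ℝ} (hG : Measurable G) {Δ : ℝ} (hΔ : 0 ≤ Δ)
    (hlaw : Measure.map G P = gaussianReal 0 (Real.toNNReal Δ)) :
    MemLp G 2 P ∧ Integrable G P ∧ ∫ ω, G ω ∂P = 0 ∧
      Integrable (fun ω => G ω ^ 2) P ∧ ∫ ω, G ω ^ 2 ∂P = Δ := by
  have hm2 : MemLp G 2 P := by
    have h1 : MemLp id 2 (Measure.map G P) := by
      rw [hlaw]; exact memLp_id_gaussianReal' _ (by simp)
    exact (memLp_map_measure_iff (by fun_prop) hG.aemeasurable).1 h1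
  have hi : Integrable G P := hm2.integrable (by norm_num)
  have h0 : ∫ ω, G ω ∂P = 0 := by
    have := integral_map (μ := P) (f := fun y : ℝ => y) hG.aemeasurable (by fun_prop)
    rw [← this, hlaw, integral_id_gaussianReal]
  refine ⟨hm2, hi, h0, hm2.integrable_sq, ?_⟩
  have hv : variance G P = Δ := by
    have := variance_map (μ := P) (X := id) (Y := G) (by fun_prop) hG.aemeasurable
    rw [Function.id_comp, hlaw, variance_id_gaussianReal] at this
    rw [← this, Real.coe_toNNReal _ hΔ]
  rw [variance_of_integral_eq_zero hG.aemeasurable h0] at hv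
  exact hv

lemma young_q {q a b : ℝ} (hq : 1 < q) (ha : 0 ≤ a) (hb : 0 ≤ b) :
    q * (a * b ^ (q - 1)) ≤ a ^ q + (q - 1) * b ^ q := by
  have hq0 : 0 < q := by linarith
  have := Real.geom_mean_le_arith_mean2_weighted (w₁ := 1 / q) (w₂ := (q - 1) / q)
    (p₁ := a ^ q) (p₂ := b ^ q) (by positivity) (div_nonneg (by linarith) hq0.le)
    (by positivity) (by positivity) (by field_simp; ring)
  rw [← Real.rpow_mul ha, ← Real.rpow_mul hb, mul_one_div_cancel hq0.ne', Real.rpow_one,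
    mul_div_cancel₀ _ hq0.ne'] at this
  have := mul_le_mul_of_nonneg_left this hq0.le
  refine this.trans (le_of_eq ?_)
  field_simp

lemma young_q2 {q a b : ℝ} (hq : 2 ≤ q) (ha : 0 ≤ a) (hb : 0 ≤ b) :
    b ^ (q - 2) * a ^ 2 ≤ 2 / q * a ^ q + (q - 2) / q * b ^ q := by
  have hq0 : 0 < q := by linarith
  have := Real.geom_mean_le_arith_mean2_weighted (w₁ := 2 / q) (w₂ := (q - 2) / q)
    (p₁ := a ^ q) (p₂ := b ^ q) (by positivity) (div_nonneg (by linarith) hq0.le)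
    (by positivity) (by positivity) (by field_simp; ring)
  rw [← Real.rpow_mul ha, ← Real.rpow_mul hb, mul_div_cancel₀ _ hq0.ne',
    mul_div_cancel₀ _ hq0.ne'] at this
  rw [mul_comm]
  exact_mod_cast this

/-- scaled version -/
lemma young_q3 {q a b A B : ℝ} (hq : 2 ≤ q) (ha : 0 ≤ a) (hb : 0 ≤ b) (hA : 0 < A) (hB : 0 < B) :
    b ^ (q - 2) * a ^ 2 ≤ B ^ (q - 2) * A ^ 2 *
      (2 / q * (a ^ q / A ^ q) + (q - 2) / q * (b ^ q / B ^ q)) := by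
  have := young_q2 hq (div_nonneg ha hA.le) (div_nonneg hb hB.le)
  rw [Real.div_rpow ha hA.le, Real.div_rpow hb hB.le, Real.div_rpow hb hB.le] at this
  have h2 := mul_le_mul_of_nonneg_left this (by positivity : 0 ≤ B ^ (q - 2) * A ^ 2)
  refine le_trans (le_of_eq ?_) h2
  field_simp

lemma mg_step {Ω : Type*} {m0 : MeasurableSpace Ω} {mΩ : MeasurableSpace Ω} {P : Measure Ω} [IsProbabilityMeasure P]
    (hm0 : m0 ≤ mΩ) {G M X : Ω → ℝ} (hG : Measurable G)
    (hind : Indep (MeasurableSpace.comap G inferInstance) m0 P)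
    (hM : Measurable[m0] M) (hX : Measurable[m0] X) {Δ : ℝ} (hΔ : 0 ≤ Δ)
    (hlaw : Measure.map G P = gaussianReal 0 (Real.toNNReal Δ)) {q η C : ℝ} (hq : 2 ≤ q)
    (hη : 0 < η) (hC : 0 ≤ C)
    (htay : ∀ m d : ℝ, |m + d| ^ q ≤ |m| ^ q + q * (m * |m| ^ (q - 2) * d)
        + q * (q - 1) / 2 * (1 + η) * (|m| ^ (q - 2) * d ^ 2) + C * |d| ^ q)
    (hMi : Integrable (fun ω => |M ω| ^ q) P) (hXi : Integrable (fun ω => |X ω| ^ q) P)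
    {α B : ℝ} (hα : 0 < α) (hB : 0 < B)
    (hMα : ∫ ω, |M ω| ^ q ∂P ≤ α ^ q) (hXB : ∫ ω, |X ω| ^ q ∂P ≤ B ^ q) :
    Integrable (fun ω => |M ω + X ω * G ω| ^ q) P ∧
    ∫ ω, |M ω + X ω * G ω| ^ q ∂P ≤ ∫ ω, |M ω| ^ q ∂P
      + q * (q - 1) / 2 * (1 + η) * (α ^ (q - 2) * B ^ 2 * Δ)
      + C * (B ^ q * (Δ ^ (q / 2) * ∫ y, |y| ^ q ∂(gaussianReal 0 1))) := by
  have hM' : Measurable M := hM.mono hm0 le_rfl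
  have hX' : Measurable X := hX.mono hm0 le_rfl
  obtain ⟨hG2, hG1, hGint, hGsq, hGsqint⟩ := gauss_sq hG hΔ hlaw
  obtain ⟨hGq, hGqint⟩ := gauss_abs_moment hG hΔ hlaw q (by linarith)
  have i1 : Integrable (fun ω => M ω * |M ω| ^ (q - 2) * X ω) P := by
    apply (hMi.add hXi).mono' (by fun_prop)
    filter_upwards with ω
    rw [norm_mul, norm_mul, Real.norm_eq_abs, Real.norm_eq_abs, Real.norm_eq_abs,
      abs_of_nonneg (by positivity : 0 ≤ |M ω| ^ (q - 2))]
    have e : |M ω| * |M ω| ^ (q - 2) * |X ω| = |X ω| * |M ω| ^ (q - 1) := by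
      rcases eq_or_ne (M ω) 0 with h | h
      · rw [h, abs_zero, Real.zero_rpow (by linarith : q - 1 ≠ 0)]; simp
      · have e1 : |M ω| ^ (q - 1) = |M ω| ^ (q - 2) * |M ω| := by
          rw [← Real.rpow_add_one (abs_pos.2 h).ne']; congr 1; ring
        rw [e1]; ring
    rw [e]
    have y := young_q (q := q) (by linarith) (abs_nonneg (X ω)) (abs_nonneg (M ω))
    have a1 : 0 ≤ |X ω| ^ q := by positivity
    have a2 : 0 ≤ |M ω| ^ q := by positivity
    simp only [Pi.add_apply]
    nlinarith
  have i2 : Integrable (fun ω => |M ω| ^ (q - 2) * X ω ^ 2) P := by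
    apply (hMi.add hXi).mono' (by fun_prop)
    filter_upwards with ω
    rw [Real.norm_of_nonneg (by positivity), ← sq_abs]
    have y := young_q2 hq (abs_nonneg (X ω)) (abs_nonneg (M ω))
    have a1 : 0 ≤ |X ω| ^ q := by positivity
    have a2 : 0 ≤ |M ω| ^ q := by positivity
    have b1 : 2 / q ≤ 1 := by rw [div_le_one (by linarith)]; exact hq
    have b2 : (q - 2) / q ≤ 1 := by rw [div_le_one (by linarith)]; linarith
    simp only [Pi.add_apply]
    nlinarith
  have hMm0 : Measurable[m0] (fun ω => |M ω| ^ (q - 2)) :=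
    (by fun_prop : Measurable (fun y : ℝ => |y| ^ (q - 2))).comp hM
  obtain ⟨j1, k1⟩ := indep_prod hm0 hG hind (Z := fun ω => M ω * |M ω| ^ (q - 2) * X ω)
    ((hM.mul hMm0).mul hX) (fun y => y) measurable_id i1 hG1
  obtain ⟨j2, k2⟩ := indep_prod hm0 hG hind (Z := fun ω => |M ω| ^ (q - 2) * X ω ^ 2)
    (hMm0.mul (hX.pow_const 2)) (fun y => y ^ 2) (by fun_prop) i2 hGsq
  obtain ⟨j3, k3⟩ := indep_prod hm0 hG hind (Z := fun ω => |X ω| ^ q)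
    ((by fun_prop : Measurable (fun y : ℝ => |y| ^ q)).comp hX) (fun y => |y| ^ q) (by fun_prop) hXi hGq
  have hpt : ∀ ω, |M ω + X ω * G ω| ^ q ≤ |M ω| ^ q
      + q * (M ω * |M ω| ^ (q - 2) * X ω * G ω)
      + q * (q - 1) / 2 * (1 + η) * (|M ω| ^ (q - 2) * X ω ^ 2 * G ω ^ 2)
      + C * (|X ω| ^ q * |G ω| ^ q) := by
    intro ω
    refine (htay (M ω) (X ω * G ω)).trans (le_of_eq ?_)
    rw [abs_mul, Real.mul_rpow (abs_nonneg _) (abs_nonneg _)]; ring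
  have ii := ((hMi.add (j1.const_mul q)).add (j2.const_mul (q * (q - 1) / 2 * (1 + η)))).add (j3.const_mul C)
  have hI : Integrable (fun ω => |M ω + X ω * G ω| ^ q) P := by
    apply ii.mono' (Measurable.aestronglyMeasurable (by fun_prop))
    filter_upwards with ω
    rw [Real.norm_of_nonneg (by positivity)]
    exact hpt ω
  refine ⟨hI, (integral_mono hI ii hpt).trans ?_⟩
  have e := integral_add ((hMi.add (j1.const_mul q)).add (j2.const_mul (q * (q - 1) / 2 * (1 + η)))) (j3.const_mul C)
  have e' := integral_add (hMi.add (j1.const_mul q)) (j2.const_mul (q * (q - 1) / 2 * (1 + η)))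
  have e'' := integral_add hMi (j1.const_mul q)
  rw [integral_const_mul] at e e' e''
  simp only [Pi.add_apply] at e e' e'' ⊢
  rw [e, e', e'', k1, k2, k3, hGint, hGsqint, hGqint]
  have hγ : 0 ≤ ∫ y, |y| ^ q ∂(gaussianReal 0 1) := integral_nonneg fun y => by positivity
  have m1 : ∫ ω, |M ω| ^ (q - 2) * X ω ^ 2 ∂P ≤ α ^ (q - 2) * B ^ 2 := by
    have : ∀ ω, |M ω| ^ (q - 2) * X ω ^ 2 ≤ α ^ (q - 2) * B ^ 2 *
      (2 / q * (|X ω| ^ q / B ^ q) + (q - 2) / q * (|M ω| ^ q / α ^ q)) := fun ω => by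
      rw [← sq_abs (X ω)]
      exact young_q3 hq (abs_nonneg (X ω)) (abs_nonneg (M ω)) hB hα
    have u1 := (hXi.div_const (B ^ q)).const_mul (2 / q)
    have u2 := (hMi.div_const (α ^ q)).const_mul ((q - 2) / q)
    refine (integral_mono i2 ((u1.add u2).const_mul (α ^ (q - 2) * B ^ 2)) this).trans ?_
    have f := integral_add u1 u2
    rw [integral_const_mul]
    simp only [Pi.add_apply]
    rw [f, integral_const_mul, integral_const_mul, integral_div, integral_div]
    have v1 : (∫ ω, |X ω| ^ q ∂P) / B ^ q ≤ 1 := by rwa [div_le_one (by positivity)]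
    have v2 : (∫ ω, |M ω| ^ q ∂P) / α ^ q ≤ 1 := by rwa [div_le_one (by positivity)]
    apply mul_le_of_le_one_right (by positivity)
    have w1 : 0 ≤ 2 / q := by positivity
    have w2 : 0 ≤ (q - 2) / q := div_nonneg (by linarith) (by linarith)
    have w3 : 2 / q + (q - 2) / q = 1 := by field_simp; ring
    nlinarith
  have hq1 : 0 ≤ q * (q - 1) / 2 * (1 + η) := by
    have : 0 ≤ q - 1 := by linarith
    positivity
  have t1 := mul_le_mul_of_nonneg_left (mul_le_mul_of_nonneg_right m1 hΔ) hq1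
  have t2 := mul_le_mul_of_nonneg_left (mul_le_mul_of_nonneg_right hXB
    (by positivity : 0 ≤ Δ ^ (q / 2) * ∫ y, |y| ^ q ∂(gaussianReal 0 1))) hC
  simp only [mul_zero, add_zero]
  linarith

def mgSum {Ω : Type*} (x g : ℕ → Ω → ℝ) (k : ℕ) (ω : Ω) : ℝ :=
  ∑ j ∈ Finset.range k, x j ω * g j ω

def runMax {Ω : Type*} (x g : ℕ → Ω → ℝ) : ℕ → Ω → ℝ
  | 0 => fun _ => 0
  | (k+1) => fun ω => max (runMax x g k ω) (mgSum x g (k+1) ω)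

lemma runMax_nonneg {Ω : Type*} (x g : ℕ → Ω → ℝ) (k : ℕ) (ω : Ω) : 0 ≤ runMax x g k ω := by
  induction k with
  | zero => simp [runMax]
  | succ k ih => exact ih.trans (le_max_left _ _)

lemma mgSum_le_runMax {Ω : Type*} (x g : ℕ → Ω → ℝ) (k : ℕ) (ω : Ω) :
    mgSum x g k ω ≤ runMax x g k ω := by
  cases k with
  | zero => simp [runMax, mgSum]
  | succ k => exact le_max_right _ _

lemma runMax_mono {Ω : Type*} (x g : ℕ → Ω → ℝ) (ω : Ω) : Monotone (fun k => runMax x g k ω) :=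
  monotone_nat_of_le_succ fun _ => le_max_left _ _

lemma mgSum_succ {Ω : Type*} (x g : ℕ → Ω → ℝ) (k : ℕ) (ω : Ω) :
    mgSum x g (k+1) ω = mgSum x g k ω + x k ω * g k ω := Finset.sum_range_succ _ _

lemma mg_meas {Ω : Type*} {n : ℕ} {Fd : ℕ → MeasurableSpace Ω}
    (hmono : Monotone Fd) {x g : ℕ → Ω → ℝ} (hx : ∀ j < n, Measurable[Fd j] (x j))
    (hg : ∀ j < n, Measurable[Fd (j+1)] (g j)) (k : ℕ) (hk : k ≤ n) :
    Measurable[Fd k] (mgSum x g k) ∧ Measurable[Fd k] (runMax x g k) := by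
  induction k with
  | zero =>
    constructor
    · have : mgSum x g 0 = fun _ => 0 := by ext; simp [mgSum]
      rw [this]; exact measurable_const
    · exact measurable_const
  | succ k ih =>
    obtain ⟨h1, h2⟩ := ih (by omega)
    have hle := hmono (Nat.le_succ k)
    have e : Measurable[Fd (k+1)] (mgSum x g (k+1)) := by
      have : mgSum x g (k+1) = fun ω => mgSum x g k ω + x k ω * g k ω := by
        ext; exact mgSum_succ ..
      rw [this]
      exact (h1.mono hle le_rfl).add (((hx k (by omega)).mono hle le_rfl).mul (hg k (by omega)))
    exact ⟨e, (h2.mono hle le_rfl).max e⟩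

lemma mg_bound {Ω : Type*} {mΩ : MeasurableSpace Ω} {P : Measure Ω} [IsProbabilityMeasure P]
    {n : ℕ} {Fd : ℕ → MeasurableSpace Ω} (hmono : Monotone Fd) (hle : ∀ k, Fd k ≤ mΩ)
    {x g : ℕ → Ω → ℝ} (hx : ∀ j < n, Measurable[Fd j] (x j))
    (hg : ∀ j < n, Measurable[Fd (j+1)] (g j))
    (hind : ∀ j < n, Indep (MeasurableSpace.comap (g j) inferInstance) (Fd j) P)
    {Δ : ℝ} (hΔ : 0 ≤ Δ)
    (hlaw : ∀ j < n, Measure.map (g j) P = gaussianReal 0 (Real.toNNReal Δ))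
    {q η C : ℝ} (hq : 2 ≤ q) (hη : 0 < η) (hC : 0 ≤ C)
    (htay : ∀ m d : ℝ, |m + d| ^ q ≤ |m| ^ q + q * (m * |m| ^ (q - 2) * d)
        + q * (q - 1) / 2 * (1 + η) * (|m| ^ (q - 2) * d ^ 2) + C * |d| ^ q)
    {α B : ℝ} (hα : 0 < α) (hB : 0 < B)
    (hxi : ∀ j < n, Integrable (fun ω => |x j ω| ^ q) P)
    (hxB : ∀ j < n, ∫ ω, |x j ω| ^ q ∂P ≤ B ^ q)
    (hsmall : q * (q - 1) / 2 * (1 + η) * (α ^ (q - 2) * B ^ 2 * Δ)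
      + C * (B ^ q * (Δ ^ (q / 2) * ∫ y, |y| ^ q ∂(gaussianReal 0 1))) ≤ α ^ q / n)
    (k : ℕ) (hk : k ≤ n) :
    Integrable (fun ω => |mgSum x g k ω| ^ q) P ∧
      ∫ ω, |mgSum x g k ω| ^ q ∂P ≤ k * (α ^ q / n) := by
  induction k with
  | zero =>
    have : (fun ω => |mgSum x g 0 ω| ^ q) = fun _ => 0 := by
      ext; simp [mgSum, Real.zero_rpow (by linarith : q ≠ 0)]
    rw [this]; simp
  | succ k ih =>
    obtain ⟨h1, h2⟩ := ih (by omega)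
    have hn : (0:ℝ) < n := by exact_mod_cast (by omega : 0 < n)
    have h3 : ∫ ω, |mgSum x g k ω| ^ q ∂P ≤ α ^ q := by
      refine h2.trans ?_
      rw [mul_div_assoc', div_le_iff₀ hn, mul_comm]
      exact mul_le_mul_of_nonneg_left (by exact_mod_cast (by omega : k ≤ n)) (by positivity)
    obtain ⟨r1, r2⟩ := mg_step (hle k) ((hg k (by omega)).mono (hle (k+1)) le_rfl) (hind k (by omega))
      (mg_meas hmono hx hg k (by omega)).1 (hx k (by omega)) hΔ (hlaw k (by omega)) hq hη hC htay h1
      (hxi k (by omega)) hα hB h3 (hxB k (by omega))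
    simp only [mgSum_succ]
    refine ⟨r1, r2.trans ?_⟩
    push_cast
    linarith

lemma doob_step {q s m y : ℝ} (hq : 2 ≤ q) (hs : 0 ≤ s) :
    q * (m * s ^ (q - 1)) - (q - 1) * s ^ q + q * (s ^ (q - 1) * (y - m)) ≤
      q * (y * (max s y) ^ (q - 1)) - (q - 1) * (max s y) ^ q := by
  rcases le_total y s with h | h
  · rw [max_eq_left h]; apply le_of_eq; ring
  · rw [max_eq_right h]
    have hy : 0 ≤ y := hs.trans h
    have e : y * y ^ (q - 1) = y ^ q := by
      rcases eq_or_ne y 0 with rfl | h0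
      · rw [zero_mul, Real.zero_rpow (by linarith)]
      · rw [mul_comm, ← Real.rpow_add_one h0]; congr 1; ring
    rw [e]
    have := young_q (q := q) (by linarith) hy hs
    linarith

lemma doob_max {Ω : Type*} {mΩ : MeasurableSpace Ω} {P : Measure Ω} [IsProbabilityMeasure P]
    {n : ℕ} {Fd : ℕ → MeasurableSpace Ω} (hmono : Monotone Fd) (hle : ∀ k, Fd k ≤ mΩ)
    {x g : ℕ → Ω → ℝ} (hx : ∀ j < n, Measurable[Fd j] (x j))
    (hg : ∀ j < n, Measurable[Fd (j+1)] (g j))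
    (hind : ∀ j < n, Indep (MeasurableSpace.comap (g j) inferInstance) (Fd j) P)
    {Δ : ℝ} (hΔ : 0 ≤ Δ)
    (hlaw : ∀ j < n, Measure.map (g j) P = gaussianReal 0 (Real.toNNReal Δ))
    {q : ℝ} (hq : 2 ≤ q)
    (hxi : ∀ j < n, Integrable (fun ω => |x j ω| ^ q) P)
    (hMi : ∀ k ≤ n, Integrable (fun ω => |mgSum x g k ω| ^ q) P) :
    Integrable (fun ω => runMax x g n ω ^ q) P ∧
      ∫ ω, runMax x g n ω ^ q ∂P ≤ (q / (q - 1)) ^ q * ∫ ω, |mgSum x g n ω| ^ q ∂P := by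
  have hS : ∀ k ≤ n, Measurable (runMax x g k) := fun k hk =>
    (mg_meas hmono hx hg k hk).2.mono (hle k) le_rfl
  have hM : ∀ k ≤ n, Measurable (mgSum x g k) := fun k hk =>
    (mg_meas hmono hx hg k hk).1.mono (hle k) le_rfl
  have hSi : ∀ k ≤ n, Integrable (fun ω => runMax x g k ω ^ q) P := by
    intro k hk
    induction k with
    | zero => simp [runMax]
    | succ k ih =>
      apply ((ih (by omega)).add (hMi (k+1) hk)).mono' ((hS (k+1) hk).pow_const q).aestronglyMeasurable
      filter_upwards with ω
      have h0 := runMax_nonneg x g (k+1) ω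
      have h1 := runMax_nonneg x g k ω
      rw [Real.norm_of_nonneg (by positivity)]
      simp only [Pi.add_apply]
      have a1 : 0 ≤ runMax x g k ω ^ q := by positivity
      have a2 : 0 ≤ |mgSum x g (k+1) ω| ^ q := by positivity
      rcases max_choice (runMax x g k ω) (mgSum x g (k+1) ω) with h | h
      · have : runMax x g (k+1) ω = runMax x g k ω := h
        rw [this]; linarith
      · have : runMax x g (k+1) ω = mgSum x g (k+1) ω := h
        rw [← this, abs_of_nonneg h0]; linarith
  have hprod : ∀ k ≤ n, ∀ Z : Ω → ℝ, Measurable Z → Integrable (fun ω => |Z ω| ^ q) P →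
      Integrable (fun ω => Z ω * runMax x g k ω ^ (q - 1)) P := by
    intro k hk Z hZ hZi
    apply (hZi.add (hSi k hk)).mono' (hZ.mul ((hS k hk).pow_const _)).aestronglyMeasurable
    filter_upwards with ω
    have h1 := runMax_nonneg x g k ω
    simp only [Pi.add_apply, Pi.mul_apply]
    rw [norm_mul, Real.norm_eq_abs, Real.norm_of_nonneg (by positivity)]
    have := young_q (q := q) (by linarith) (abs_nonneg (Z ω)) h1
    have a1 : 0 ≤ runMax x g k ω ^ q := by positivity
    have a2 : 0 ≤ |Z ω| ^ q := by positivity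
    nlinarith
  have hD : ∀ k ≤ n, 0 ≤ ∫ ω, (q * (mgSum x g k ω * runMax x g k ω ^ (q - 1))
      - (q - 1) * runMax x g k ω ^ q) ∂P := by
    intro k hk
    induction k with
    | zero => simp [runMax, mgSum, Real.zero_rpow (by linarith : q ≠ 0)]
    | succ k ih =>
      have hk' : k < n := by omega
      have ih := ih hk'.le
      have hxm : Measurable (x k) := (hx k hk').mono (hle k) le_rfl
      have hgm : Measurable (g k) := (hg k hk').mono (hle _) le_rfl
      obtain ⟨-, hG1, hG0, -, -⟩ := gauss_sq hgm hΔ (hlaw k hk')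
      obtain ⟨j1, k1⟩ := indep_prod (hle k) hgm (hind k hk')
        (Z := fun ω => x k ω * runMax x g k ω ^ (q - 1))
        ((hx k hk').mul ((mg_meas hmono hx hg k hk'.le).2.pow_const _)) (fun y => y) measurable_id
        (hprod k hk'.le _ hxm (hxi k hk')) hG1
      rw [hG0, mul_zero] at k1
      have I1 := ((hprod k hk'.le _ (hM k hk'.le) (hMi k hk'.le)).const_mul q).sub
        ((hSi k hk'.le).const_mul (q - 1))
      have I2 := ((hprod (k+1) hk _ (hM _ hk) (hMi _ hk)).const_mul q).sub
        ((hSi (k+1) hk).const_mul (q - 1))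
      have I3 := I1.add (j1.const_mul q)
      have h := integral_mono I3 I2 (fun ω => by
        have := doob_step (q := q) (m := mgSum x g k ω) (y := mgSum x g (k+1) ω) hq (runMax_nonneg x g k ω)
        simp only [Pi.add_apply, Pi.sub_apply]
        refine le_trans (le_of_eq ?_) this
        rw [mgSum_succ]; ring)
      have e := integral_add I1 (j1.const_mul q)
      rw [integral_const_mul, k1, mul_zero, add_zero] at e
      simp only [Pi.add_apply, Pi.sub_apply] at h e
      linarith
  refine ⟨hSi n le_rfl, ?_⟩
  have hDn := hD n le_rfl
  have J1 := (hprod n le_rfl _ (hM n le_rfl) (hMi n le_rfl)).const_mul q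
  have J2 := (hSi n le_rfl).const_mul (q - 1)
  rw [integral_sub J1 J2, integral_const_mul, integral_const_mul] at hDn
  have hr : 0 < q / (q - 1) := div_pos (by linarith) (by linarith)
  have hpt : ∀ ω, q * (q / (q - 1) * (mgSum x g n ω * runMax x g n ω ^ (q - 1))) ≤
      (q / (q - 1)) ^ q * |mgSum x g n ω| ^ q + (q - 1) * runMax x g n ω ^ q := by
    intro ω
    have h1 := runMax_nonneg x g n ω
    have := young_q (q := q) (a := q / (q - 1) * |mgSum x g n ω|) (by linarith) (by positivity) h1
    rw [Real.mul_rpow hr.le (abs_nonneg _)] at this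
    refine le_trans ?_ this
    have h2 : mgSum x g n ω * runMax x g n ω ^ (q - 1) ≤ |mgSum x g n ω| * runMax x g n ω ^ (q - 1) :=
      mul_le_mul_of_nonneg_right (le_abs_self _) (by positivity)
    rw [mul_assoc (q / (q - 1))]
    gcongr
  have h := integral_mono (((hprod n le_rfl _ (hM n le_rfl) (hMi n le_rfl)).const_mul (q / (q-1))).const_mul q)
    (((hMi n le_rfl).const_mul ((q / (q - 1)) ^ q)).add J2) hpt
  have e := integral_add ((hMi n le_rfl).const_mul ((q / (q - 1)) ^ q)) J2
  simp only [Pi.add_apply] at h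
  rw [e, integral_const_mul, integral_const_mul, integral_const_mul, integral_const_mul] at h
  set I := ∫ ω, mgSum x g n ω * runMax x g n ω ^ (q - 1) ∂P
  set S := ∫ ω, runMax x g n ω ^ q ∂P
  have h5 : q * S ≤ q * (q / (q - 1) * I) := by
    apply mul_le_mul_of_nonneg_left _ (by linarith)
    rw [div_mul_eq_mul_div, le_div_iff₀ (by linarith)]; linarith
  linarith

lemma qv_discrete {Ω : Type*} {mΩ : MeasurableSpace Ω} {P : Measure Ω} [IsProbabilityMeasure P]
    {n : ℕ} {Fd : ℕ → MeasurableSpace Ω} (hmono : Monotone Fd) (hle : ∀ k, Fd k ≤ mΩ)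
    {g : ℕ → Ω → ℝ}
    (hg : ∀ j < n, Measurable[Fd (j+1)] (g j))
    (hind : ∀ j < n, Indep (MeasurableSpace.comap (g j) inferInstance) (Fd j) P)
    {Δ : ℝ} (hΔ : 0 ≤ Δ)
    (hlaw : ∀ j < n, Measure.map (g j) P = gaussianReal 0 (Real.toNNReal Δ))
    {ε : ℝ} (hε : 0 < ε) :
    P {ω | ε ≤ |∑ j ∈ Finset.range n, g j ω ^ 2 - n * Δ|} ≤
      ENNReal.ofReal (n * (Δ ^ 2 * ∫ y, |y| ^ (4:ℝ) ∂(gaussianReal 0 1)) / ε ^ 2) := by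
  have hgm : ∀ j < n, Measurable (g j) := fun j hj => (hg j hj).mono (hle _) le_rfl
  have h4 : ∀ j < n, Integrable (fun ω => (g j ω ^ 2) ^ 2) P ∧
      ∫ ω, (g j ω ^ 2) ^ 2 ∂P = Δ ^ 2 * ∫ y, |y| ^ (4:ℝ) ∂(gaussianReal 0 1) := by
    intro j hj
    have := gauss_abs_moment (hgm j hj) hΔ (hlaw j hj) 4 (by norm_num)
    have e : (fun ω => |g j ω| ^ (4:ℝ)) = fun ω => (g j ω ^ 2) ^ 2 := by
      ext ω
      rw [show (4:ℝ) = ((4:ℕ):ℝ) by norm_num, Real.rpow_natCast, ← sq_abs (g j ω)]; ring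
    rw [e] at this
    refine ⟨this.1, this.2.trans ?_⟩
    norm_num
  have hmem : ∀ j ∈ Finset.range n, MemLp (fun ω => g j ω ^ 2) 2 P := by
    intro j hj
    have hj := Finset.mem_range.1 hj
    exact (memLp_two_iff_integrable_sq ((hgm j hj).pow_const 2).aestronglyMeasurable).2 (h4 j hj).1
  have hindlt : ∀ i j, i < j → j < n → IndepFun (fun ω => g i ω ^ 2) (fun ω => g j ω ^ 2) P := by
    intro i j hij hj
    have h1 : IndepFun (g j) (g i) P := by
      rw [IndepFun_iff_Indep]
      exact indep_of_indep_of_le_right (hind j hj)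
        (((hg i (by omega)).mono (hmono (by omega : i + 1 ≤ j)) le_rfl).comap_le)
    exact (h1.symm.comp (measurable_id.pow_const 2) (measurable_id.pow_const 2))
  have hpair : Set.Pairwise (Finset.range n : Set ℕ)
      (Function.onFun (fun f h => IndepFun f h P) (fun j ω => g j ω ^ 2)) := by
    intro i hi j hj hij
    have hi := Finset.mem_range.1 hi
    have hj := Finset.mem_range.1 hj
    rcases lt_or_gt_of_ne hij with h | h
    · exact hindlt i j h hj
    · exact (hindlt j i h hi).symm
  have hvar := IndepFun.variance_sum hmem hpair
  have hmemS : MemLp (∑ j ∈ Finset.range n, fun ω => g j ω ^ 2) 2 P := memLp_finsetSum' _ hmem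
  have hc := meas_ge_le_variance_div_sq hmemS hε
  have hmean : ∫ ω, (∑ j ∈ Finset.range n, fun ω => g j ω ^ 2) ω ∂P = n * Δ := by
    simp only [Finset.sum_apply]
    rw [integral_finsetSum _ (fun j hj => (hmem j hj).integrable (by norm_num))]
    rw [Finset.sum_congr rfl (fun j hj => (gauss_sq (hgm j (Finset.mem_range.1 hj)) hΔ
      (hlaw j (Finset.mem_range.1 hj))).2.2.2.2)]
    simp
  rw [hmean] at hc
  simp only [Finset.sum_apply] at hc
  refine hc.trans (ENNReal.ofReal_le_ofReal ?_)
  apply div_le_div_of_nonneg_right _ (by positivity)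
  rw [hvar]
  calc _ ≤ ∑ j ∈ Finset.range n, Δ ^ 2 * ∫ y, |y| ^ (4:ℝ) ∂(gaussianReal 0 1) := by
        apply Finset.sum_le_sum
        intro j hj
        have hj' := Finset.mem_range.1 hj
        refine (variance_le_expectation_sq (hmem j hj).1).trans ?_
        exact (h4 j hj').2.le
    _ = _ := by simp

lemma path_bound {T c : ℝ} (hT : 0 < T) (hc : 0 ≤ c) {x w b : ℝ → ℝ}
    (hx : ContinuousOn x (Icc 0 T)) (hw : ContinuousOn w (Icc 0 T)) (hx0 : ∀ t, 0 ≤ x t)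
    (hb : IntervalIntegrable b volume 0 T)
    (hxb : ∀ s ∈ Icc 0 T, x s * b s ≤ c * (1 + x s ^ 2)) {ε : ℝ} (hε : 0 < ε) :
    ∃ N : ℕ, ∀ n : ℕ, N ≤ n → 0 < n →
      (∀ j ≤ n, x (j * (T / n)) = x 0 + (∫ s in (0:ℝ)..(j * (T / n)), b s) + w (j * (T / n))) →
      ∀ S : ℝ, (∀ k ≤ n, ∑ j ∈ Finset.range k, x (j * (T / n)) *
          (w ((j + 1 : ℕ) * (T / n)) - w (j * (T / n))) ≤ S) →
      ∀ t ∈ Icc 0 T, x t ^ 2 ≤ x 0 ^ 2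
        + 2 * c * (T + ∑ j ∈ Finset.range n, (T / n) * x (j * (T / n)) ^ 2)
        + 2 * S + ∑ j ∈ Finset.range n, (w ((j + 1 : ℕ) * (T / n)) - w (j * (T / n))) ^ 2 + ε := by
  obtain ⟨K, hK⟩ := isCompact_Icc.exists_bound_of_continuousOn hx
  have hK0 : 0 ≤ K := (norm_nonneg _).trans (hK 0 ⟨le_rfl, hT.le⟩)
  set L := ∫ s in (0:ℝ)..T, |b s| with hL
  have hL0 : 0 ≤ L := intervalIntegral.integral_nonneg hT.le fun _ _ => abs_nonneg _
  obtain ⟨δ, hδ, hδε⟩ : ∃ δ > 0, δ * (4 * c * K * T + 4 * L + 2 * K) ≤ ε := by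
    refine ⟨ε / (4 * c * K * T + 4 * L + 2 * K + 1), by positivity, ?_⟩
    rw [div_mul_eq_mul_div, div_le_iff₀ (by positivity)]
    nlinarith
  have ux := isCompact_Icc.uniformContinuousOn_of_continuous hx
  have uw := isCompact_Icc.uniformContinuousOn_of_continuous hw
  rw [Metric.uniformContinuousOn_iff_le] at ux uw
  obtain ⟨r1, hr1, ux⟩ := ux δ hδ
  obtain ⟨r2, hr2, uw⟩ := uw δ hδ
  obtain ⟨N, hN⟩ := exists_nat_gt (T / min r1 r2)
  refine ⟨N, fun n hNn hn hsde S hS => ?_⟩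
  have hn' : (0:ℝ) < n := by exact_mod_cast hn
  set Δ := T / n with hΔ
  have hΔ0 : 0 < Δ := by positivity
  have hnΔ : n * Δ = T := by rw [hΔ]; field_simp
  have hΔr : Δ ≤ min r1 r2 := by
    have : (N:ℝ) ≤ n := by exact_mod_cast hNn
    rw [hΔ, div_le_iff₀ hn']
    rw [div_lt_iff₀ (by positivity)] at hN
    nlinarith [lt_min hr1 hr2]
  have hΔr1 : Δ ≤ r1 := hΔr.trans (min_le_left _ _)
  have hΔr2 : Δ ≤ r2 := hΔr.trans (min_le_right _ _)
  have ux' : ∀ s ∈ Icc 0 T, ∀ t ∈ Icc 0 T, |s - t| ≤ Δ → |x s - x t| ≤ δ :=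
    fun s hs t ht h => ux s hs t ht (h.trans hΔr1)
  have uw' : ∀ s ∈ Icc 0 T, ∀ t ∈ Icc 0 T, |s - t| ≤ Δ → |w s - w t| ≤ δ :=
    fun s hs t ht h => uw s hs t ht (h.trans hΔr2)
  have hgrid : ∀ j ≤ n, (j:ℝ) * Δ ∈ Icc 0 T := fun j hj => by
    refine ⟨by positivity, ?_⟩
    rw [← hnΔ]
    have : (j:ℝ) ≤ n := by exact_mod_cast hj
    gcongr
  have hxK : ∀ t ∈ Icc 0 T, x t ≤ K := fun t ht => (le_abs_self _).trans (hK t ht)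
  have hsq : ∀ s ∈ Icc 0 T, ∀ t ∈ Icc 0 T, |s - t| ≤ Δ → x s ^ 2 ≤ x t ^ 2 + 2 * K * δ := by
    intro s hs t ht h
    have h1 := abs_le.1 (ux' s hs t ht h)
    have h2 := hxK s hs
    have h3 := hxK t ht
    have h4 := hx0 s
    have h5 := hx0 t
    nlinarith
  have hsub : ∀ a ∈ Icc 0 T, ∀ d ∈ Icc 0 T, IntervalIntegrable b volume a d := by
    intro a ha d hd
    apply hb.mono_set
    rw [uIcc_of_le hT.le]
    exact uIcc_subset_Icc ha hd
  -- one step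
  have hstep : ∀ j < n, x ((j + 1 : ℕ) * Δ) ^ 2 ≤ x (j * Δ) ^ 2
      + 2 * (c * (1 + x (j * Δ) ^ 2 + 2 * K * δ) * Δ)
      + 2 * (x (j * Δ) * (w ((j + 1 : ℕ) * Δ) - w (j * Δ)))
      + (w ((j + 1 : ℕ) * Δ) - w (j * Δ)) ^ 2
      + 4 * δ * (∫ s in (j * Δ)..((j + 1 : ℕ) * Δ), |b s|) := by
    intro j hj
    have g1 := hgrid j hj.le
    have g2 := hgrid (j+1) hj
    have hlt : (j:ℝ) * Δ ≤ (j + 1 : ℕ) * Δ := by push_cast; nlinarith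
    have hdist : |((j + 1 : ℕ):ℝ) * Δ - j * Δ| ≤ Δ := by
      push_cast; rw [show ((j:ℝ) + 1) * Δ - j * Δ = Δ by ring, abs_of_pos hΔ0]
    have e1 := hsde j hj.le
    have e2 := hsde (j+1) hj
    have i0 := hsub _ g1 _ g2
    have e3 := intervalIntegral.integral_add_adjacent_intervals (hsub 0 ⟨le_rfl, hT.le⟩ _ g1) i0
    have d1 := abs_le.1 (ux' _ g2 _ g1 hdist)
    have d2 := abs_le.1 (uw' _ g2 _ g1 hdist)
    have hbabs : |∫ s in (j * Δ)..((j + 1 : ℕ) * Δ), b s| ≤ ∫ s in (j * Δ)..((j + 1 : ℕ) * Δ), |b s| :=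
      intervalIntegral.abs_integral_le_integral_abs hlt
    have hxa : x (j * Δ) * (∫ s in (j * Δ)..((j + 1 : ℕ) * Δ), b s) ≤
        c * (1 + x (j * Δ) ^ 2 + 2 * K * δ) * Δ + δ * ∫ s in (j * Δ)..((j + 1 : ℕ) * Δ), |b s| := by
      rw [← intervalIntegral.integral_const_mul, ← intervalIntegral.integral_const_mul]
      have e4 : c * (1 + x (j * Δ) ^ 2 + 2 * K * δ) * Δ =
        ∫ s in (j * Δ)..((j + 1 : ℕ) * Δ), c * (1 + x (j * Δ) ^ 2 + 2 * K * δ) := by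
        rw [intervalIntegral.integral_const, smul_eq_mul]; push_cast; ring
      rw [e4, ← intervalIntegral.integral_add (by simp) (i0.abs.const_mul δ)]
      apply intervalIntegral.integral_mono_on hlt (i0.const_mul _)
        ((by simp : IntervalIntegrable (fun _ => c * (1 + x (j * Δ) ^ 2 + 2 * K * δ)) volume _ _).add (i0.abs.const_mul δ))
      intro s hs
      have hsT : s ∈ Icc 0 T := ⟨g1.1.trans hs.1, hs.2.trans g2.2⟩
      have hds : |s - j * Δ| ≤ Δ := by
        have := hs.2; push_cast at this
        rw [abs_of_nonneg (by linarith [hs.1])]; linarith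
      have f1 := hsq s hsT _ g1 hds
      have f2 := hxb s hsT
      have f3 : x (j * Δ) * b s ≤ x s * b s + δ * |b s| := by
        have : (x (j * Δ) - x s) * b s ≤ δ * |b s| := by
          refine (le_abs_self _).trans ?_
          rw [abs_mul, abs_sub_comm]
          exact mul_le_mul_of_nonneg_right (ux' s hsT _ g1 hds) (abs_nonneg _)
        linarith
      have f4 : c * (1 + x s ^ 2) ≤ c * (1 + x (j * Δ) ^ 2 + 2 * K * δ) :=
        mul_le_mul_of_nonneg_left (by linarith) hc
      linarith
    set a := ∫ s in (j * Δ)..((j + 1 : ℕ) * Δ), b s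
    set I := ∫ s in (j * Δ)..((j + 1 : ℕ) * Δ), |b s|
    set xj := x (j * Δ)
    set xj' := x ((j + 1 : ℕ) * Δ)
    set dw := w ((j + 1 : ℕ) * Δ) - w (j * Δ) with hdw
    have hdx : xj' - xj = a + dw := by rw [hdw]; linarith
    have hcross : a * ((xj' - xj) + dw) ≤ 2 * δ * I := by
      refine (le_abs_self _).trans ?_
      rw [abs_mul]
      have : |xj' - xj + dw| ≤ 2 * δ := by rw [abs_le]; constructor <;> linarith [d1.1, d1.2, d2.1, d2.2]
      calc |a| * |xj' - xj + dw| ≤ I * (2 * δ) := by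
            apply mul_le_mul hbabs this (abs_nonneg _) ((abs_nonneg _).trans hbabs)
        _ = _ := by ring
    have hid : xj' ^ 2 = xj ^ 2 + 2 * (xj * a) + 2 * (xj * dw) + dw ^ 2 + a * ((xj' - xj) + dw) := by
      have : a = xj' - xj - dw := by linarith
      rw [this]; ring
    linarith
  have hsum : ∀ k ≤ n, x (k * Δ) ^ 2 ≤ x 0 ^ 2
      + 2 * c * (k * Δ + ∑ j ∈ Finset.range k, Δ * x (j * Δ) ^ 2) + 4 * c * K * δ * (k * Δ)
      + 2 * (∑ j ∈ Finset.range k, x (j * Δ) * (w ((j + 1 : ℕ) * Δ) - w (j * Δ)))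
      + ∑ j ∈ Finset.range k, (w ((j + 1 : ℕ) * Δ) - w (j * Δ)) ^ 2
      + 4 * δ * (∫ s in (0:ℝ)..(k * Δ), |b s|) := by
    intro k hk
    induction k with
    | zero => simp
    | succ k ih =>
      have ih := ih (by omega)
      have st := hstep k (by omega)
      rw [Finset.sum_range_succ, Finset.sum_range_succ, Finset.sum_range_succ,
        ← intervalIntegral.integral_add_adjacent_intervals
          (hsub 0 ⟨le_rfl, hT.le⟩ _ (hgrid k (by omega))).abs (hsub _ (hgrid k (by omega)) _ (hgrid (k+1) hk)).abs]
      have e : ((k + 1 : ℕ) : ℝ) * Δ = k * Δ + Δ := by push_cast; ring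
      have e' := congrArg (fun z => 2 * c * z) e
      have e'' := congrArg (fun z => 4 * c * K * δ * z) e
      rw [mul_add (2 * c) (((k + 1 : ℕ) : ℝ) * Δ), e', e'']
      linarith
  intro t ht
  -- nearest grid point
  obtain ⟨k, hk, hkt⟩ : ∃ k ≤ n, |t - k * Δ| ≤ Δ := by
    refine ⟨⌊t / Δ⌋₊, ?_, ?_⟩
    · apply Nat.floor_le_of_le
      rw [div_le_iff₀ hΔ0, hnΔ]; exact ht.2
    · have h1 := Nat.floor_le (div_nonneg ht.1 hΔ0.le)
      have h2 := (Nat.lt_floor_add_one (t / Δ)).le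
      rw [le_div_iff₀ hΔ0] at h1
      rw [div_le_iff₀ hΔ0] at h2
      rw [abs_of_nonneg (by linarith)]; linarith
  have g := hgrid k hk
  have h1 := hsq t ht _ g hkt
  have h2 := hsum k hk
  have h3 := hS k hk
  have hr : Finset.range k ⊆ Finset.range n := Finset.range_subset_range.2 hk
  have h4 : ∑ j ∈ Finset.range k, Δ * x (j * Δ) ^ 2 ≤ ∑ j ∈ Finset.range n, Δ * x (j * Δ) ^ 2 :=
    Finset.sum_le_sum_of_subset_of_nonneg hr fun _ _ _ => by positivity
  have h5 : ∑ j ∈ Finset.range k, (w ((j + 1 : ℕ) * Δ) - w (j * Δ)) ^ 2 ≤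
      ∑ j ∈ Finset.range n, (w ((j + 1 : ℕ) * Δ) - w (j * Δ)) ^ 2 :=
    Finset.sum_le_sum_of_subset_of_nonneg hr fun _ _ _ => by positivity
  have h6 : ∫ s in (0:ℝ)..(k * Δ), |b s| ≤ L := by
    apply intervalIntegral.integral_mono_interval le_rfl g.1 g.2 _ hb.abs
    filter_upwards with s using abs_nonneg _
  have h7 : 2 * c * (k * Δ + ∑ j ∈ Finset.range k, Δ * x (j * Δ) ^ 2) ≤
      2 * c * (T + ∑ j ∈ Finset.range n, Δ * x (j * Δ) ^ 2) :=
    mul_le_mul_of_nonneg_left (by linarith [g.2]) (by positivity)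
  have h8 : 4 * c * K * δ * (k * Δ) ≤ 4 * c * K * δ * T :=
    mul_le_mul_of_nonneg_left g.2 (by positivity)
  have h9 : 4 * δ * (∫ s in (0:ℝ)..(k * Δ), |b s|) ≤ 4 * δ * L :=
    mul_le_mul_of_nonneg_left h6 (by positivity)
  linarith

lemma small_eventually {q η C α B T B1 γ : ℝ} (hq : 2 ≤ q) (hT : 0 < T) (hB : 0 < B) (hB1 : B < B1)
    (hη : η = B1 / B - 1) (hCq : q = 2 → C = 0)
    (hα : α = Real.sqrt (q * (q - 1) / 2 * T) * B1) :
    ∃ N : ℕ, ∀ n : ℕ, N ≤ n → 0 < n →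
      q * (q - 1) / 2 * (1 + η) * (α ^ (q - 2) * B ^ 2 * (T / n))
      + C * (B ^ q * ((T / n) ^ (q / 2) * γ)) ≤ α ^ q / n := by
  have hκ : 0 < q * (q - 1) / 2 := by
    have : 0 < q - 1 := by linarith
    positivity
  have hB1' : 0 < B1 := hB.trans hB1
  have hα0 : 0 < α := by rw [hα]; positivity
  have hα2 : α ^ 2 = q * (q - 1) / 2 * T * B1 ^ 2 := by
    rw [hα, mul_pow, Real.sq_sqrt (by positivity)]
  have hαq : α ^ q = α ^ (q - 2) * α ^ 2 := by
    rw [← Real.rpow_natCast α 2, ← Real.rpow_add hα0]; norm_num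
  have hlim : Tendsto (fun n : ℕ => C * (B ^ q * (T ^ (q / 2) * (n:ℝ) ^ (1 - q / 2) * γ))) atTop (nhds 0) := by
    rcases eq_or_lt_of_le hq with h | h
    · rw [hCq h.symm]; simp
    · have h1 : Tendsto (fun n : ℕ => (n:ℝ) ^ (-(q / 2 - 1))) atTop (nhds 0) :=
        (tendsto_rpow_neg_atTop (by linarith : 0 < q / 2 - 1)).comp tendsto_natCast_atTop_atTop
      have h2 := (((h1.const_mul (T ^ (q / 2))).mul_const γ).const_mul (B ^ q)).const_mul C
      simp only [mul_zero, zero_mul] at h2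
      refine h2.congr fun n => ?_
      congr 5; ring
  have hgap : 0 < α ^ (q - 2) * (q * (q - 1) / 2 * T * (B1 ^ 2 - B1 * B)) := by
    have : 0 < B1 ^ 2 - B1 * B := by nlinarith
    positivity
  obtain ⟨N, hN⟩ := eventually_atTop.1 (hlim.eventually_lt_const hgap)
  refine ⟨N, fun n hn hn0 => ?_⟩
  have hn' : (0:ℝ) < n := by exact_mod_cast hn0
  have h := hN n hn
  rw [le_div_iff₀ hn', hαq, hα2]
  have e1 : (T / n) ^ (q / 2) * n = T ^ (q / 2) * (n:ℝ) ^ (1 - q / 2) := by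
    rw [Real.div_rpow hT.le hn'.le, Real.rpow_sub hn', Real.rpow_one]
    field_simp
  have e2 : q * (q - 1) / 2 * (1 + η) * (α ^ (q - 2) * B ^ 2 * (T / n)) * n
      = α ^ (q - 2) * (q * (q - 1) / 2 * T * (B1 * B)) := by
    rw [hη]; field_simp; ring
  have e3 : C * (B ^ q * ((T / n) ^ (q / 2) * γ)) * n =
      C * (B ^ q * (T ^ (q / 2) * (n:ℝ) ^ (1 - q / 2) * γ)) := by
    rw [← e1]; ring
  rw [add_mul, e2, e3]
  nlinarith

lemma eLpNorm_le_of_integral {Ω : Type*} {mΩ : MeasurableSpace Ω} {P : Measure Ω} {f : Ω → ℝ}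
    {q R : ℝ} (hq : 0 < q) (hR : 0 ≤ R) (hf : Measurable f) (hi : Integrable (fun ω => |f ω| ^ q) P)
    (h : ∫ ω, |f ω| ^ q ∂P ≤ R ^ q) : eLpNorm f (ENNReal.ofReal q) P ≤ ENNReal.ofReal R := by
  have hq0 : ENNReal.ofReal q ≠ 0 := by simpa using hq
  have hm : MemLp f (ENNReal.ofReal q) P := by
    rw [← integrable_norm_rpow_iff hf.aestronglyMeasurable hq0 (by simp), ENNReal.toReal_ofReal hq.le]
    exact hi
  rw [hm.eLpNorm_eq_integral_rpow_norm hq0 (by simp), ENNReal.toReal_ofReal hq.le]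
  apply ENNReal.ofReal_le_ofReal
  have h0 : 0 ≤ ∫ ω, |f ω| ^ q ∂P := integral_nonneg fun ω => by positivity
  calc (∫ ω, ‖f ω‖ ^ q ∂P) ^ q⁻¹ ≤ (R ^ q) ^ q⁻¹ := Real.rpow_le_rpow h0 h (by positivity)
    _ = R := Real.rpow_rpow_inv hR hq.ne'

lemma integral_of_eLpNorm_le {Ω : Type*} {mΩ : MeasurableSpace Ω} {P : Measure Ω} {f : Ω → ℝ}
    {q R : ℝ} (hq : 0 < q) (hR : 0 ≤ R) (hf : Measurable f)
    (h : eLpNorm f (ENNReal.ofReal q) P ≤ ENNReal.ofReal R) :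
    Integrable (fun ω => |f ω| ^ q) P ∧ ∫ ω, |f ω| ^ q ∂P ≤ R ^ q := by
  have hq0 : ENNReal.ofReal q ≠ 0 := by simpa using hq
  have hm : MemLp f (ENNReal.ofReal q) P :=
    ⟨hf.aestronglyMeasurable, h.trans_lt ENNReal.ofReal_lt_top⟩
  constructor
  · have := hm.integrable_norm_rpow hq0 (by simp)
    rwa [ENNReal.toReal_ofReal hq.le] at this
  · rw [hm.eLpNorm_eq_integral_rpow_norm hq0 (by simp), ENNReal.toReal_ofReal hq.le,
      ENNReal.ofReal_le_ofReal_iff hR] at h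
    have h0 : 0 ≤ ∫ ω, |f ω| ^ q ∂P := integral_nonneg fun ω => by positivity
    calc ∫ ω, |f ω| ^ q ∂P = ((∫ ω, |f ω| ^ q ∂P) ^ q⁻¹) ^ q := (Real.rpow_inv_rpow h0 hq.ne').symm
      _ ≤ R ^ q := Real.rpow_le_rpow (by positivity) h hq.le

lemma eLpNorm_sq_le {Ω : Type*} {mΩ : MeasurableSpace Ω} {P : Measure Ω} (f : Ω → ℝ)
    {q : ℝ} (hq : 0 < q) :
    eLpNorm (fun ω => f ω ^ 2) (ENNReal.ofReal q) P = eLpNorm f (ENNReal.ofReal (2 * q)) P ^ 2 := by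
  have := eLpNorm_norm_rpow (μ := P) (p := ENNReal.ofReal q) f (q := 2) (by norm_num)
  rw [← ENNReal.ofReal_mul hq.le, mul_comm q 2] at this
  rw [← ENNReal.rpow_natCast]
  push_cast
  rw [← this]
  congr 1; ext ω
  rw [Real.norm_eq_abs]
  simp

lemma fatou_eLp {Ω : Type*} {mΩ : MeasurableSpace Ω} {P : Measure Ω} {f : Ω → ℝ} {Y : ℕ → Ω → ℝ}
    {q : ℝ} (hq : 0 < q) (hY : ∀ i, Measurable (Y i)) (hf : ∀ ω, 0 ≤ f ω)
    (h : ∀ᵐ ω ∂P, ∀ᶠ i in atTop, f ω ≤ Y i ω) {R : ℝ≥0∞}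
    (hR : ∀ᶠ i in atTop, eLpNorm (Y i) (ENNReal.ofReal q) P ≤ R) :
    eLpNorm f (ENNReal.ofReal q) P ≤ R := by
  have hq0 : ENNReal.ofReal q ≠ 0 := by simpa using hq
  have key : ∀ u : Ω → ℝ, eLpNorm u (ENNReal.ofReal q) P = (∫⁻ ω, ‖u ω‖ₑ ^ q ∂P) ^ (1 / q) := by
    intro u
    rw [eLpNorm_eq_lintegral_rpow_enorm_toReal hq0 (by simp), ENNReal.toReal_ofReal hq.le]
  have hR' : ∀ᶠ i in atTop, ∫⁻ ω, ‖Y i ω‖ₑ ^ q ∂P ≤ R ^ q := by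
    filter_upwards [hR] with i hi
    rw [key] at hi
    calc ∫⁻ ω, ‖Y i ω‖ₑ ^ q ∂P = ((∫⁻ ω, ‖Y i ω‖ₑ ^ q ∂P) ^ (1/q)) ^ q := by
          rw [← ENNReal.rpow_mul, one_div_mul_cancel hq.ne', ENNReal.rpow_one]
      _ ≤ R ^ q := ENNReal.rpow_le_rpow hi hq.le
  rw [key]
  have h1 : ∫⁻ ω, ‖f ω‖ₑ ^ q ∂P ≤ R ^ q := by
    calc ∫⁻ ω, ‖f ω‖ₑ ^ q ∂P ≤ ∫⁻ ω, liminf (fun i => ‖Y i ω‖ₑ ^ q) atTop ∂P := by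
          apply lintegral_mono_ae
          filter_upwards [h] with ω hω
          apply le_liminf_of_le (by isBoundedDefault)
          filter_upwards [hω] with i hi
          apply ENNReal.rpow_le_rpow _ hq.le
          apply enorm_le_iff_norm_le.2
          rw [Real.norm_of_nonneg (hf ω), Real.norm_of_nonneg ((hf ω).trans hi)]
          exact hi
      _ ≤ liminf (fun i => ∫⁻ ω, ‖Y i ω‖ₑ ^ q ∂P) atTop :=
          lintegral_liminf_le fun i => by have := hY i; fun_prop
      _ ≤ R ^ q := liminf_le_of_frequently_le' hR'.frequently
  calc (∫⁻ ω, ‖f ω‖ₑ ^ q ∂P) ^ (1/q) ≤ (R ^ q) ^ (1/q) := ENNReal.rpow_le_rpow h1 (by positivity)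
    _ = R := by rw [← ENNReal.rpow_mul, mul_one_div_cancel hq.ne', ENNReal.rpow_one]

theorem sup_moment_bound_for_additive_noise_processes
    {Ω : Type*} [MeasurableSpace Ω] (P : Measure Ω) [IsProbabilityMeasure P]
    (T : ℝ) (hT : 0 ≤ T)
    (F : ℝ → MeasurableSpace Ω)
    (hF_mono : ∀ s t : ℝ, s ≤ t → F s ≤ F t)
    (hF_le : ∀ t : ℝ, F t ≤ (inferInstance : MeasurableSpace Ω))
    (μ : ℝ → ℝ) (hμmeas : Measurable μ)
    (W X : ℝ → Ω → ℝ)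
    (hW0 : ∀ ω, W 0 ω = 0)
    (hWadapt : ∀ t ∈ Set.Icc (0:ℝ) T, @Measurable Ω ℝ (F t) _ (W t))
    (hWcont : ∀ ω, ContinuousOn (fun t => W t ω) (Set.Icc 0 T))
    (hWlaw : ∀ s t : ℝ, 0 ≤ s → s ≤ t → t ≤ T →
      Measure.map (fun ω => W t ω - W s ω) P = gaussianReal 0 (Real.toNNReal (t - s)))
    (hWindep : ∀ s t : ℝ, 0 ≤ s → s ≤ t → t ≤ T →
      Indep (MeasurableSpace.comap (fun ω => W t ω - W s ω) inferInstance) (F s) P)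
    (hXnonneg : ∀ t ω, 0 ≤ X t ω)
    (hXadapt : ∀ t ∈ Set.Icc (0:ℝ) T, @Measurable Ω ℝ (F t) _ (X t))
    (hXcont : ∀ ω, ContinuousOn (fun t => X t ω) (Set.Icc 0 T))
    (hXint : ∀ᵐ ω ∂P, IntervalIntegrable (fun s => |μ (X s ω)|) volume 0 T)
    (hSDE : ∀ t ∈ Set.Icc (0:ℝ) T, ∀ᵐ ω ∂P,
      X t ω = X 0 ω + (∫ s in (0:ℝ)..t, μ (X s ω)) + W t ω)
    (c q : ℝ) (hc : 0 ≤ c) (hq : 2 ≤ q)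
    (hdrift : ∀ x : ℝ, 0 < x → x * μ x ≤ c * (1 + x ^ 2)) :
    eLpNorm (fun ω => ⨆ t : Set.Icc (0:ℝ) T, (X t.1 ω) ^ 2) (ENNReal.ofReal q) P
      ≤ eLpNorm (fun ω => (X 0 ω) ^ 2) (ENNReal.ofReal q) P
        + ENNReal.ofReal (2 * c * T) *
            (⨆ s : Set.Icc (0:ℝ) T, eLpNorm (fun ω => X s.1 ω) (ENNReal.ofReal (2 * q)) P) ^ 2
        + ENNReal.ofReal (Real.sqrt (2 * T * q ^ 3 / (q - 1))) *
            (⨆ s : Set.Icc (0:ℝ) T, eLpNorm (fun ω => X s.1 ω) (ENNReal.ofReal q) P)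
        + ENNReal.ofReal (T * (2 * c + 1)) := by
  have hq0 : 0 < q := by linarith
  have hq1 : 0 < q - 1 := by linarith
  rcases eq_or_lt_of_le hT with hT0 | hTpos
  · subst hT0
    have e : (fun ω => ⨆ t : Set.Icc (0:ℝ) 0, (X t.1 ω) ^ 2) = fun ω => (X 0 ω) ^ 2 := by
      ext ω
      have : ∀ t : Set.Icc (0:ℝ) 0, (X t.1 ω) ^ 2 = (X 0 ω) ^ 2 := fun t => by
        rw [le_antisymm t.2.2 t.2.1]
      simp_rw [this]
      haveI : Nonempty (Set.Icc (0:ℝ) 0) := ⟨⟨0, le_rfl, le_rfl⟩⟩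
      exact ciSup_const
    rw [e]
    refine le_trans ?_ (le_add_of_nonneg_right zero_le')
    refine le_trans ?_ (le_add_of_nonneg_right zero_le')
    exact le_add_of_nonneg_right zero_le'
  haveI : Nonempty (Set.Icc (0:ℝ) T) := ⟨⟨0, le_rfl, hT⟩⟩
  set Kc := Real.sqrt (2 * T * q ^ 3 / (q - 1)) with hKc
  have hKpos : 0 < Kc := by rw [hKc]; positivity
  have hKeq : Kc = 2 * (q / (q - 1) * Real.sqrt (q * (q - 1) / 2 * T)) := by
    rw [hKc, Real.sqrt_eq_iff_eq_sq (by positivity) (by positivity)]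
    rw [mul_pow, mul_pow, Real.sq_sqrt (by positivity)]
    field_simp
  set Bs := ⨆ s : Set.Icc (0:ℝ) T, eLpNorm (fun ω => X s.1 ω) (ENNReal.ofReal q) P with hBs
  set B2 := ⨆ s : Set.Icc (0:ℝ) T, eLpNorm (fun ω => X s.1 ω) (ENNReal.ofReal (2 * q)) P with hB2
  rcases eq_or_ne Bs ⊤ with hBtop | hBfin
  · rw [hBtop, ENNReal.mul_top (by simpa using hKpos)]
    simp
  set B0 := Bs.toReal with hB0
  have hB0nn : 0 ≤ B0 := ENNReal.toReal_nonneg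
  have hBsB0 : Bs = ENNReal.ofReal B0 := (ENNReal.ofReal_toReal hBfin).symm
  have hXm : ∀ t ∈ Icc (0:ℝ) T, Measurable (X t) := fun t ht => (hXadapt t ht).mono (hF_le t) le_rfl
  have hWm : ∀ t ∈ Icc (0:ℝ) T, Measurable (W t) := fun t ht => (hWadapt t ht).mono (hF_le t) le_rfl
  have hXB0 : ∀ t ∈ Icc (0:ℝ) T, eLpNorm (X t) (ENNReal.ofReal q) P ≤ ENNReal.ofReal B0 := by
    intro t ht
    rw [← hBsB0]
    exact le_iSup (fun s : Set.Icc (0:ℝ) T => eLpNorm (fun ω => X s.1 ω) (ENNReal.ofReal q) P) ⟨t, ht⟩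
  -- the grid
  have hgrid : ∀ n : ℕ, 0 < n → ∀ j ≤ n, (j:ℝ) * (T / n) ∈ Icc 0 T := by
    intro n hn j hj
    have hn' : (0:ℝ) < n := by exact_mod_cast hn
    refine ⟨by positivity, ?_⟩
    have : (j:ℝ) ≤ n := by exact_mod_cast hj
    calc (j:ℝ) * (T / n) ≤ n * (T / n) := by gcongr
      _ = T := by field_simp
  let x : ℕ → ℕ → Ω → ℝ := fun n j => X (j * (T / n))
  let g : ℕ → ℕ → Ω → ℝ := fun n j ω => W ((j + 1 : ℕ) * (T / n)) ω - W (j * (T / n)) ω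
  let Fd : ℕ → ℕ → MeasurableSpace Ω := fun n j => F (j * (T / n))
  have hFdm : ∀ n, Monotone (Fd n) := fun n i j hij => hF_mono _ _ (by
    have : (i:ℝ) ≤ j := by exact_mod_cast hij
    gcongr)
  have hFdle : ∀ n k, Fd n k ≤ (inferInstance : MeasurableSpace Ω) := fun n k => hF_le _
  have hx : ∀ n, ∀ j < n, Measurable[Fd n j] (x n j) := fun n j hj =>
    hXadapt _ (hgrid n (by omega) j hj.le)
  have hg : ∀ n, ∀ j < n, Measurable[Fd n (j+1)] (g n j) := fun n j hj =>
    (hWadapt _ (hgrid n (by omega) (j+1) hj)).sub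
      ((hWadapt _ (hgrid n (by omega) j hj.le)).mono (hFdm n (Nat.le_succ j)) le_rfl)
  have hstep : ∀ n j : ℕ, (j:ℝ) * (T / n) ≤ (j + 1 : ℕ) * (T / n) := fun n j => by
    push_cast
    have : 0 ≤ T / n := by positivity
    linarith
  have hind : ∀ n, ∀ j < n, Indep (MeasurableSpace.comap (g n j) inferInstance) (Fd n j) P :=
    fun n j hj => hWindep _ _ (hgrid n (by omega) j hj.le).1 (hstep n j) (hgrid n (by omega) (j+1) hj).2
  have hlaw : ∀ n, ∀ j < n, Measure.map (g n j) P = gaussianReal 0 (Real.toNNReal (T / n)) := by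
    intro n j hj
    have := hWlaw _ _ (hgrid n (by omega) j hj.le).1 (hstep n j) (hgrid n (by omega) (j+1) hj).2
    rw [show ((j + 1 : ℕ):ℝ) * (T / n) - j * (T / n) = T / n by push_cast; ring] at this
    exact this
  have hΔ : ∀ n : ℕ, 0 ≤ T / n := fun n => by positivity
  have hxi : ∀ n, ∀ j < n, Integrable (fun ω => |x n j ω| ^ q) P ∧ ∫ ω, |x n j ω| ^ q ∂P ≤ B0 ^ q :=
    fun n j hj => integral_of_eLpNorm_le hq0 hB0nn (hXm _ (hgrid n (by omega) j hj.le))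
      (hXB0 _ (hgrid n (by omega) j hj.le))
  -- quadratic variation
  have hqv : TendstoInMeasure P (fun n ω => ∑ j ∈ Finset.range n, g n j ω ^ 2) atTop (fun _ => T) := by
    rw [tendstoInMeasure_iff_norm]
    intro ε hε
    set γ := ∫ y, |y| ^ (4:ℝ) ∂(gaussianReal 0 1) with hγ
    have hlim : Tendsto (fun n : ℕ => ENNReal.ofReal ((T ^ 2 * γ / ε ^ 2) / n)) atTop (nhds 0) := by
      have := ENNReal.tendsto_ofReal (tendsto_const_div_atTop_nhds_zero_nat (T ^ 2 * γ / ε ^ 2))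
      rwa [ENNReal.ofReal_zero] at this
    refine tendsto_of_tendsto_of_tendsto_of_le_of_le' tendsto_const_nhds hlim
      (Eventually.of_forall fun _ => zero_le') ?_
    filter_upwards [eventually_gt_atTop 0] with n hn
    have hn' : (0:ℝ) < n := by exact_mod_cast hn
    have := qv_discrete (hFdm n) (hFdle n) (hg n) (hind n) (hΔ n) (hlaw n) hε
    rw [show (n:ℝ) * (T / n) = T by field_simp] at this
    refine this.trans (le_of_eq ?_)
    rw [← hγ]
    congr 1
    field_simp
  obtain ⟨ns, hns, hqvae⟩ := hqv.exists_seq_tendsto_ae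
  have hSDEall : ∀ᵐ ω ∂P, ∀ n : ℕ, ∀ j : ℕ, 0 < n → j ≤ n →
      X (j * (T / n)) ω = X 0 ω + (∫ s in (0:ℝ)..(j * (T / n)), μ (X s ω)) + W (j * (T / n)) ω := by
    rw [ae_all_iff]; intro n
    rw [ae_all_iff]; intro j
    by_cases h : 0 < n ∧ j ≤ n
    · filter_upwards [hSDE _ (hgrid n h.1 j h.2)] with ω hω _ _ using hω
    · exact Eventually.of_forall fun ω h1 h2 => absurd ⟨h1, h2⟩ h
  -- main estimate with epsilon
  apply ENNReal.le_of_forall_pos_le_add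
  intro ε' hε' _
  set ε : ℝ := ε' / (Kc + 1) with hε
  have hεpos : 0 < ε := by
    have : (0:ℝ) < ε' := by exact_mod_cast hε'
    positivity
  set B1 := B0 + ε with hB1
  set α := Real.sqrt (q * (q - 1) / 2 * T) * B1 with hα
  have hB1pos : 0 < B1 := by positivity
  have hαpos : 0 < α := by rw [hα]; positivity
  set B := B0 + ε / 2 with hB
  have hBpos : 0 < B := by positivity
  have hBB1 : B < B1 := by rw [hB, hB1]; linarith
  set η := B1 / B - 1 with hη
  have hηpos : 0 < η := by rw [hη, sub_pos, one_lt_div hBpos]; exact hBB1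
  obtain ⟨C, hC, hCq, htay⟩ := taylor_two q hq η hηpos
  obtain ⟨N1, hN1⟩ := small_eventually (γ := ∫ y, |y| ^ q ∂(gaussianReal 0 1)) hq hTpos hBpos hBB1 hη hCq hα
  have hSn : ∀ n, N1 ≤ n → 0 < n → eLpNorm (runMax (x n) (g n) n) (ENNReal.ofReal q) P ≤
      ENNReal.ofReal (q / (q - 1) * α) := by
    intro n hn hn0
    have hn' : (0:ℝ) < n := by exact_mod_cast hn0
    have hMb := mg_bound (hFdm n) (hFdle n) (hx n) (hg n) (hind n) (hΔ n) (hlaw n) hq hηpos hC htay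
      hαpos hBpos (fun j hj => (hxi n j hj).1)
      (fun j hj => (hxi n j hj).2.trans (Real.rpow_le_rpow hB0nn (by rw [hB]; linarith) hq0.le))
      (hN1 n hn hn0)
    obtain ⟨hSi, hSb⟩ := doob_max (hFdm n) (hFdle n) (hx n) (hg n) (hind n) (hΔ n) (hlaw n) hq
      (fun j hj => (hxi n j hj).1) (fun k hk => (hMb k hk).1)
    have habs : (fun ω => |runMax (x n) (g n) n ω| ^ q) = fun ω => runMax (x n) (g n) n ω ^ q := by
      ext ω; rw [abs_of_nonneg (runMax_nonneg _ _ _ _)]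
    apply eLpNorm_le_of_integral hq0 (by positivity)
      ((mg_meas (hFdm n) (hx n) (hg n) n le_rfl).2.mono (hFdle n n) le_rfl)
    · rw [habs]; exact hSi
    · rw [habs]
      refine hSb.trans ?_
      rw [Real.mul_rpow (by positivity) hαpos.le]
      have := (hMb n le_rfl).2
      rw [show (n:ℝ) * (α ^ q / n) = α ^ q by field_simp] at this
      gcongr
  let Y : ℕ → Ω → ℝ := fun n ω => X 0 ω ^ 2 + 2 * c * (∑ j ∈ Finset.range n, (T / n) * x n j ω ^ 2)
    + 2 * runMax (x n) (g n) n ω + (T * (2 * c + 1) + ε)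
  have h0T : (0:ℝ) ∈ Icc 0 T := ⟨le_rfl, hT⟩
  have hS1m : ∀ n, Measurable (fun ω => ∑ j ∈ Finset.range n, (T / n) * x n j ω ^ 2) := fun n => by
    apply Finset.measurable_fun_sum
    intro j hj
    have hj := Finset.mem_range.1 hj
    exact ((hXm _ (hgrid n (by omega) j hj.le)).pow_const 2).const_mul _
  have hrm : ∀ n, Measurable (runMax (x n) (g n) n) := fun n =>
    (mg_meas (hFdm n) (hx n) (hg n) n le_rfl).2.mono (hFdle n n) le_rfl
  have hYm : ∀ n, Measurable (Y n) := fun n =>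
    ((((hXm 0 h0T).pow_const 2).add ((hS1m n).const_mul _)).add ((hrm n).const_mul 2)).add_const _
  have hpath : ∀ᵐ ω ∂P, ∀ᶠ i in atTop, (⨆ t : Set.Icc (0:ℝ) T, (X t.1 ω) ^ 2) ≤ Y (ns i) ω := by
    filter_upwards [hXint, hSDEall, hqvae] with ω h1 h2 h3
    have hbm : AEStronglyMeasurable (fun s => μ (X s ω)) (volume.restrict (uIoc 0 T)) := by
      have hXam : AEMeasurable (fun s => X s ω) (volume.restrict (uIoc 0 T)) := by
        rw [uIoc_of_le hT]
        exact ((hXcont ω).mono Ioc_subset_Icc_self).aemeasurable measurableSet_Ioc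
      exact (hμmeas.comp_aemeasurable hXam).aestronglyMeasurable
    have hb : IntervalIntegrable (fun s => μ (X s ω)) volume 0 T := by
      rw [intervalIntegrable_iff] at h1 ⊢
      exact (integrable_norm_iff hbm).1 h1
    obtain ⟨N, hN⟩ := path_bound hTpos hc (hXcont ω) (hWcont ω) (fun t => hXnonneg t ω) hb
      (fun s _ => by
        rcases (hXnonneg s ω).eq_or_lt with h | h
        · rw [← h]; simpa using hc
        · exact hdrift _ h) (half_pos hεpos)
    have h4 := h3.eventually_lt_const (by linarith : T < T + ε / 2)
    filter_upwards [h4, hns.tendsto_atTop.eventually_ge_atTop N,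
      hns.tendsto_atTop.eventually_gt_atTop 0] with i i1 i2 i3
    apply ciSup_le
    intro t
    have := hN (ns i) i2 i3 (fun j hj => h2 _ j i3 hj) (runMax (x (ns i)) (g (ns i)) (ns i) ω)
      (fun k hk => (mgSum_le_runMax (x (ns i)) (g (ns i)) k ω).trans (runMax_mono _ _ ω hk)) t.1 t.2
    refine this.trans ?_
    simp only [Y, x]
    simp only [g] at i1
    linarith
  have hq1' : (1:ℝ≥0∞) ≤ ENNReal.ofReal q := by
    rw [← ENNReal.ofReal_one]; exact ENNReal.ofReal_le_ofReal (by linarith)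
  have hX2 : ∀ t ∈ Icc (0:ℝ) T, eLpNorm (fun ω => X t ω ^ 2) (ENNReal.ofReal q) P ≤ B2 ^ 2 := by
    intro t ht
    rw [eLpNorm_sq_le _ hq0]
    gcongr
    exact le_iSup (fun s : Set.Icc (0:ℝ) T => eLpNorm (fun ω => X s.1 ω) (ENNReal.ofReal (2 * q)) P) ⟨t, ht⟩
  have hS1 : ∀ n, 0 < n → eLpNorm (fun ω => 2 * c * ∑ j ∈ Finset.range n, (T / n) * x n j ω ^ 2)
      (ENNReal.ofReal q) P ≤ ENNReal.ofReal (2 * c * T) * B2 ^ 2 := by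
    intro n hn
    have hn' : (0:ℝ) < n := by exact_mod_cast hn
    have e := eLpNorm_const_smul (2 * c) (fun ω => ∑ j ∈ Finset.range n, (T / n) * x n j ω ^ 2)
      (ENNReal.ofReal q) P
    have e0 : (fun ω => 2 * c * ∑ j ∈ Finset.range n, (T / n) * x n j ω ^ 2) =
      (2 * c) • (fun ω => ∑ j ∈ Finset.range n, (T / n) * x n j ω ^ 2) := rfl
    rw [e0, e, Real.enorm_of_nonneg (by positivity), show ENNReal.ofReal (2 * c * T) = ENNReal.ofReal (2 * c) * ENNReal.ofReal T from ENNReal.ofReal_mul (by positivity), mul_assoc]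
    gcongr
    have e1 : (fun ω => ∑ j ∈ Finset.range n, (T / n) * x n j ω ^ 2) =
      ∑ j ∈ Finset.range n, (T / n) • (fun ω => x n j ω ^ 2) := by
      ext ω; simp
    rw [e1]
    refine (eLpNorm_sum_le (fun j hj => ?_) hq1').trans ?_
    · have hj := Finset.mem_range.1 hj
      exact (((hXm _ (hgrid n (by omega) j hj.le)).pow_const 2).const_smul (T / (n:ℝ))).aestronglyMeasurable
    · calc _ ≤ ∑ j ∈ Finset.range n, ENNReal.ofReal (T / n) * B2 ^ 2 := by
            apply Finset.sum_le_sum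
            intro j hj
            have hj := Finset.mem_range.1 hj
            rw [eLpNorm_const_smul, Real.enorm_of_nonneg (hΔ n)]
            gcongr
            exact hX2 _ (hgrid n (by omega) j hj.le)
        _ = ENNReal.ofReal T * B2 ^ 2 := by
            rw [Finset.sum_const, Finset.card_range, nsmul_eq_mul, ← mul_assoc,
              ← ENNReal.ofReal_natCast, ← ENNReal.ofReal_mul (by positivity)]
            congr 2; field_simp
  refine (fatou_eLp (Y := fun i => Y (ns i)) hq0 (fun i => hYm _)
    (fun ω => Real.iSup_nonneg fun t => sq_nonneg _) hpath
    (R := eLpNorm (fun ω => (X 0 ω) ^ 2) (ENNReal.ofReal q) P + ENNReal.ofReal (2 * c * T) * B2 ^ 2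
      + ENNReal.ofReal (Kc * B1) + ENNReal.ofReal (T * (2 * c + 1) + ε)) ?_).trans ?_
  · filter_upwards [hns.tendsto_atTop.eventually_ge_atTop N1,
      hns.tendsto_atTop.eventually_gt_atTop 0] with i i1 i2
    set n := ns i
    have m1 : Measurable (fun ω => X 0 ω ^ 2) := (hXm 0 h0T).pow_const 2
    have m2 : Measurable (fun ω => 2 * c * ∑ j ∈ Finset.range n, (T / n) * x n j ω ^ 2) :=
      (hS1m n).const_mul _
    have m3 : Measurable (fun ω => 2 * runMax (x n) (g n) n ω) := (hrm n).const_mul 2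
    have a1 := eLpNorm_add_le (p := ENNReal.ofReal q) (μ := P) ((m1.add m2).add m3).aestronglyMeasurable
      (measurable_const (a := T * (2 * c + 1) + ε)).aestronglyMeasurable hq1'
    have a2 := eLpNorm_add_le (p := ENNReal.ofReal q) (μ := P) (m1.add m2).aestronglyMeasurable
      m3.aestronglyMeasurable hq1'
    have a3 := eLpNorm_add_le (p := ENNReal.ofReal q) (μ := P) m1.aestronglyMeasurable
      m2.aestronglyMeasurable hq1'
    refine a1.trans (add_le_add (a2.trans (add_le_add (a3.trans (add_le_add le_rfl (hS1 n i2))) ?_)) ?_)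
    · have e := eLpNorm_const_smul (2:ℝ) (runMax (x n) (g n) n) (ENNReal.ofReal q) P
      have e0 : (fun ω => 2 * runMax (x n) (g n) n ω) = (2:ℝ) • runMax (x n) (g n) n := rfl
      rw [e0, e, Real.enorm_of_nonneg (by norm_num), hKeq]
      rw [show 2 * (q / (q - 1) * Real.sqrt (q * (q - 1) / 2 * T)) * B1 = 2 * (q / (q - 1) * α) by
        rw [hα]; ring, ENNReal.ofReal_mul (by norm_num : (0:ℝ) ≤ 2)]
      gcongr
      exact hSn n i1 i2
    · have e := eLpNorm_const (μ := P) (p := ENNReal.ofReal q) (T * (2 * c + 1) + ε)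
        (by simpa using hq0) (IsProbabilityMeasure.ne_zero P)
      rw [e, measure_univ, ENNReal.one_rpow, mul_one, Real.enorm_of_nonneg (by positivity)]
  · have e1 : ENNReal.ofReal (Kc * B1) = ENNReal.ofReal Kc * Bs + ENNReal.ofReal (Kc * ε) := by
      rw [hBsB0, ← ENNReal.ofReal_mul hKpos.le, ← ENNReal.ofReal_add (by positivity) (by positivity)]
      congr 1; rw [hB1]; ring
    have e2 : ENNReal.ofReal (T * (2 * c + 1) + ε) = ENNReal.ofReal (T * (2 * c + 1)) + ENNReal.ofReal ε :=
      ENNReal.ofReal_add (by positivity) hεpos.le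
    have e3 : (ε' : ℝ≥0∞) = ENNReal.ofReal (Kc * ε) + ENNReal.ofReal ε := by
      rw [← ENNReal.ofReal_add (by positivity) hεpos.le, ← ENNReal.ofReal_coe_nnreal]
      congr 1; rw [hε]; field_simp
    rw [e1, e2, e3]
    apply le_of_eq
    ring

end
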